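/- The determinant of A_1 equals k_1 · b_n · ∏_{i=1}^{n−1} (k_{i+1} b_i − k_i a_i). -/

import Mathlib

/-- Factor a scalar out of the last column, then subtract multiples of the last column from the
others. -/
theorem Matrix.det_eq_mul_det_of_last_col {R : Type*} [CommRing R] {m : ℕ}
    (A B : Matrix (Fin (m + 1)) (Fin (m + 1)) R) (β : Fin (m + 1) → R)
    (hlast : ∀ i, A i (Fin.last m) = β (Fin.last m) * B i (Fin.last m))
    (hcol : ∀ i, ∀ j ≠ Fin.last m, A i j = B i j + β j * B i (Fin.last m)) :
    A.det = β (Fin.last m) * B.det := by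
  set C := A.updateCol (Fin.last m) (fun i ↦ B i (Fin.last m))
  have hA : A = C.updateCol (Fin.last m) (β (Fin.last m) • fun i ↦ B i (Fin.last m)) := by
    ext i j
    by_cases hj : j = Fin.last m
    · subst hj; simp [hlast]
    · simp [C, hj]
  have hC : C.det = B.det := by
    rw [← Matrix.det_transpose C, ← Matrix.det_transpose B]
    refine Matrix.det_eq_of_forall_row_eq_smul_add_const
      (Function.update β (Fin.last m) 0) (Fin.last m) (by simp) fun j i ↦ ?_
    by_cases hj : j = Fin.last m
    · subst hj; simp [C]
    · simp [C, hj, hcol]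
  rw [hA, Matrix.det_updateCol_smul, ← hC]
  simp [C]

theorem Matrix.det_of_forall_le_eq_zero_off_last_col {R : Type*} [CommRing R] {m : ℕ}
    (B : Matrix (Fin (m + 1)) (Fin (m + 1)) R)
    (hzero : ∀ i j : Fin (m + 1), j ≠ Fin.last m → i ≤ j → B i j = 0) :
    B.det = B 0 (Fin.last m) * ∏ i : Fin m, -B i.succ i.castSucc := by
  rw [Matrix.det_succ_row_zero, Finset.sum_eq_single (Fin.last m)]
  · rw [Matrix.det_of_isLowerTriangular]
    · simp [Finset.prod_neg]
      ring
    · intro i j hij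
      have hij' : i < j := hij
      exact hzero _ _ (by simp) (by rwa [Fin.succAbove_last, Fin.succ_le_castSucc_iff])
  · intro j _ hj
    simp [hzero 0 j hj (Fin.zero_le j)]
  · simp

/-- `det A₁ = k₁ bₙ ∏_{i=1}^{n-1} (k_{i+1} bᵢ - kᵢ aᵢ)`. -/
theorem stmt_2 {F : Type*} [Field F] {n : ℕ} (hn : 2 ≤ n)
    (a b k : ℕ → F)
    (A₁ : Matrix (Fin n) (Fin n) F)
    (hA : ∀ i j : Fin n, A₁ i j =
      if (i : ℕ) ≤ (j : ℕ) then k ((i : ℕ) + 1) * b ((j : ℕ) + 1)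
      else k ((j : ℕ) + 1) * a ((j : ℕ) + 1)) :
    A₁.det = k 1 * b n * ∏ i ∈ Finset.Icc 1 (n - 1), (k (i + 1) * b i - k i * a i) := by
  obtain ⟨m, rfl⟩ : ∃ m, n = m + 1 := ⟨n - 1, by omega⟩
  let B : Matrix (Fin (m + 1)) (Fin (m + 1)) F := fun i j ↦
    if j = Fin.last m then k (i + 1)
    else if i ≤ j then 0 else k (j + 1) * a (j + 1) - k (i + 1) * b (j + 1)
  have hB : B.det = k 1 * ∏ i : Fin m, (k (i + 1 + 1) * b (i + 1) - k (i + 1) * a (i + 1)) := by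
    rw [Matrix.det_of_forall_le_eq_zero_off_last_col B fun i j hj hij ↦ by simp [B, hj, hij]]
    simp [B, (Fin.castSucc_lt_last _).ne]
  rw [Matrix.det_eq_mul_det_of_last_col A₁ B fun j ↦ b (j + 1), hB,
    Fin.prod_univ_eq_prod_range (fun i ↦ k (i + 1 + 1) * b (i + 1) - k (i + 1) * a (i + 1)),
    Finset.range_eq_Ico,
    Finset.prod_Ico_add' (fun i ↦ k (i + 1) * b i - k i * a i) 0 m 1]
  · simp only [Fin.val_last, zero_add, Nat.add_sub_cancel, Finset.Ico_add_one_right_eq_Icc]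
    ring
  · intro i
    simp [hA, B, Fin.is_le, mul_comm]
  · intro i j hj
    by_cases hij : i ≤ j
    · simp [hA, B, hj, hij, mul_comm]
    · simp [hA, B, hj, hij]
      ring
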